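/- One has Σ_{m=0}^{∞} m · ∫_0^1 ( m·(x − x²)^m + x·(x − x²)^m/(1 − x + x²) ) dx = (9 + 4√3·π)/54. -/

import Mathlib

open intervalIntegral Real

/-!
Put `t = x - x ^ 2` and `q = 1 - t = 1 - x + x ^ 2`. Both are invariant under `x ↦ 1 - x`, so the
factor `x` in the second term may be replaced by its mean `1 / 2`. As `0 ≤ t ≤ 1 / 4` on the unit
interval, summation and integration commute, and the two parts of the series become
`∫ t * (1 + t) / q ^ 3` and `(1 / 2) * ∫ t / q ^ 3`. Expanding in powers of `q`, the classical
reduction formula for `∫ q ^ n` leaves only `∫ 1 / q`, an arctangent; the first part contributes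
the multiple of `π` and the second the rational number.
-/

section

open MeasureTheory

lemma integral_id_smul_of_symmetric {E : Type*} [NormedAddCommGroup E] [NormedSpace ℝ E]
    {f : ℝ → E} {a b : ℝ} (hf : IntervalIntegrable f volume a b)
    (hsymm : ∀ x ∈ Set.uIcc a b, f (a + b - x) = f x) :
    ∫ x in a..b, x • f x = ((a + b) / 2) • ∫ x in a..b, f x := by
  have hxf : IntervalIntegrable (fun x ↦ x • f x) volume a b :=
    hf.continuousOn_smul continuousOn_id
  have hreflect : ∫ x in a..b, x • f x = (a + b) • (∫ x in a..b, f x) - ∫ x in a..b, x • f x :=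
    calc ∫ x in a..b, x • f x = ∫ x in a..b, (a + b - x) • f (a + b - x) := by
          rw [integral_comp_sub_left (fun x ↦ x • f x), add_sub_cancel_right, add_sub_cancel_left]
      _ = ∫ x in a..b, ((a + b) • f x - x • f x) :=
          integral_congr fun x hx ↦ by simp only [hsymm x hx, sub_smul]
      _ = (a + b) • (∫ x in a..b, f x) - ∫ x in a..b, x • f x := by
          rw [intervalIntegral.integral_sub (f := fun x ↦ (a + b) • f x) (hf.smul (a + b)) hxf,
            intervalIntegral.integral_smul]
  have htwice : (2 : ℝ) • ∫ x in a..b, x • f x = (a + b) • ∫ x in a..b, f x := by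
    rw [two_smul]
    exact eq_sub_iff_add_eq.mp hreflect
  rw [div_eq_inv_mul, mul_smul, ← htwice, inv_smul_smul₀ two_ne_zero]

lemma hasSum_sq_mul_geometric_of_norm_lt_one {𝕜 : Type*} [NormedField 𝕜]
    [HasSummableGeomSeries 𝕜] {r : 𝕜} (hr : ‖r‖ < 1) :
    HasSum (fun n : ℕ ↦ (n : 𝕜) ^ 2 * r ^ n) (r * (1 + r) / (1 - r) ^ 3) := by
  have hr1 : 1 - r ≠ 0 := sub_ne_zero.mpr fun h ↦ by simp [← h] at hr
  have hchoose (n : ℕ) : ((n + 2).choose 2 : 𝕜) * 2 = (n + 2) * (n + 1) := by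
    have h : (n + 2).choose 2 * 2 = (n + 2) * (n + 1) := by
      rw [← Nat.add_one_mul_choose_eq, Nat.choose_one_right]
    exact_mod_cast congrArg (Nat.cast (R := 𝕜)) h
  have hsum := (((hasSum_choose_mul_geometric_of_norm_lt_one 2 hr).mul_left 2).sub
    ((hasSum_coe_mul_geometric_of_norm_lt_one hr).mul_left 3)).sub
    ((hasSum_geometric_of_norm_lt_one hr).mul_left 2)
  convert! hsum using 1
  · funext n
    linear_combination -r ^ n * hchoose n
  · field_simp
    ring

lemma hasSum_mul_integral_mul_pow {𝕜 : Type*} [RCLike 𝕜] {μ : Measure ℝ} {c : ℕ → 𝕜}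
    {g u F : ℝ → 𝕜} {a b r : ℝ} (hc : Summable fun n ↦ ‖c n‖ * r ^ n)
    (hg : IntervalIntegrable g μ a b) (hu : AEStronglyMeasurable u (μ.restrict (Set.uIoc a b)))
    (hur : ∀ x ∈ Set.uIoc a b, ‖u x‖ ≤ r)
    (hF : ∀ x ∈ Set.uIoc a b, HasSum (fun n ↦ c n * u x ^ n) (F x)) :
    HasSum (fun n ↦ c n * ∫ x in a..b, g x * u x ^ n ∂μ) (∫ x in a..b, g x * F x ∂μ) := by
  simp only [← intervalIntegral.integral_const_mul]
  refine hasSum_integral_of_dominated_convergence (fun n x ↦ ‖g x‖ * (‖c n‖ * r ^ n))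
    (fun n ↦ ?_) (fun n ↦ .of_forall fun x hx ↦ ?_) (.of_forall fun x _ ↦ hc.mul_left _) ?_
    (.of_forall fun x hx ↦ ?_)
  · exact (hg.def'.aestronglyMeasurable.mul (hu.pow n)).const_mul (c n)
  · calc ‖c n * (g x * u x ^ n)‖ = ‖g x‖ * (‖c n‖ * ‖u x‖ ^ n) := by
          rw [norm_mul, norm_mul, norm_pow, mul_left_comm]
      _ ≤ ‖g x‖ * (‖c n‖ * r ^ n) := by gcongr; exact hur x hx
  · simp only [tsum_mul_left]
    exact hg.norm.mul_const _
  · simpa only [mul_left_comm] using (hF x hx).mul_left (g x)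

end

section Quadratic

variable {a b c u v : ℝ}

lemma sq_deriv_quadratic (a b c x : ℝ) :
    (2 * a * x + b) ^ 2 = 4 * a * (a * x ^ 2 + b * x + c) + discrim a b c := by
  rw [discrim]
  ring

lemma quadratic_ne_zero_of_discrim_neg (h : discrim a b c < 0) (x : ℝ) :
    a * x ^ 2 + b * x + c ≠ 0 := by
  rw [sq]
  exact quadratic_ne_zero_of_discrim_ne_sq (fun s ↦ (h.trans_le (sq_nonneg s)).ne) x

lemma hasDerivAt_quadratic (a b c x : ℝ) :
    HasDerivAt (fun x ↦ a * x ^ 2 + b * x + c) (2 * a * x + b) x := by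
  refine ((((hasDerivAt_id' x).pow 2).const_mul a).add
    ((hasDerivAt_id' x).const_mul b)).add_const c |>.congr_deriv ?_
  simp only [Nat.cast_ofNat]
  ring

lemma intervalIntegrable_quadratic_zpow (n : ℤ)
    (hq : ∀ x ∈ Set.uIcc u v, a * x ^ 2 + b * x + c ≠ 0) :
    IntervalIntegrable (fun x ↦ (a * x ^ 2 + b * x + c) ^ n) MeasureTheory.volume u v := by
  refine ContinuousOn.intervalIntegrable (ContinuousOn.zpow₀ ?_ n fun x hx ↦ .inl (hq x hx))
  fun_prop

lemma hasDerivAt_deriv_mul_quadratic_zpow (n : ℤ) {x : ℝ} (hq : a * x ^ 2 + b * x + c ≠ 0) :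
    HasDerivAt (fun x ↦ (2 * a * x + b) * (a * x ^ 2 + b * x + c) ^ n)
      ((4 * n + 2) * a * (a * x ^ 2 + b * x + c) ^ n
        + n * discrim a b c * (a * x ^ 2 + b * x + c) ^ (n - 1)) x := by
  have hlin : HasDerivAt (fun x ↦ 2 * a * x + b) (2 * a) x :=
    (((hasDerivAt_id' x).const_mul (2 * a)).add_const b).congr_deriv (mul_one _)
  have hpow := (hasDerivAt_zpow n _ (.inl hq)).comp x (hasDerivAt_quadratic a b c x)
  refine (hlin.mul hpow).congr_deriv ?_
  have hsucc := zpow_sub_one₀ hq n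
  have hsq := sq_deriv_quadratic a b c x
  simp only [Function.comp_apply]
  generalize a * x ^ 2 + b * x + c = q at *
  rw [hsucc]
  field_simp
  linear_combination n * hsq

lemma integral_quadratic_zpow_sub_one (n : ℤ)
    (hq : ∀ x ∈ Set.uIcc u v, a * x ^ 2 + b * x + c ≠ 0) :
    n * discrim a b c * ∫ x in u..v, (a * x ^ 2 + b * x + c) ^ (n - 1)
      = (2 * a * v + b) * (a * v ^ 2 + b * v + c) ^ n
        - (2 * a * u + b) * (a * u ^ 2 + b * u + c) ^ n
        - (4 * n + 2) * a * ∫ x in u..v, (a * x ^ 2 + b * x + c) ^ n := by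
  have hint (k : ℤ) (d : ℝ) := (intervalIntegrable_quadratic_zpow k hq).const_mul d
  have hftc := integral_eq_sub_of_hasDerivAt
    (fun x hx ↦ hasDerivAt_deriv_mul_quadratic_zpow n (hq x hx)) ((hint _ _).add (hint _ _))
  rw [integral_add (hint _ _) (hint _ _), intervalIntegral.integral_const_mul,
    intervalIntegral.integral_const_mul] at hftc
  linear_combination hftc

lemma hasDerivAt_arctan_quadratic (h : discrim a b c < 0) (x : ℝ) :
    HasDerivAt (fun x ↦ 2 / √(-discrim a b c) * arctan ((2 * a * x + b) / √(-discrim a b c)))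
      (a * x ^ 2 + b * x + c)⁻¹ x := by
  have hs : √(-discrim a b c) ≠ 0 := (Real.sqrt_pos.mpr (neg_pos.mpr h)).ne'
  have hs2 : √(-discrim a b c) ^ 2 = -discrim a b c := Real.sq_sqrt (neg_pos.mpr h).le
  have ha : a ≠ 0 := by
    rintro rfl
    exact h.not_ge (by simpa [discrim] using sq_nonneg b)
  have hq := quadratic_ne_zero_of_discrim_neg h x
  have hsq := sq_deriv_quadratic a b c x
  have hlin : HasDerivAt (fun x ↦ (2 * a * x + b) / √(-discrim a b c))
      (2 * a / √(-discrim a b c)) x :=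
    ((((hasDerivAt_id' x).const_mul (2 * a)).add_const b).div_const _).congr_deriv
      (by rw [mul_one])
  refine (hlin.arctan.const_mul _).congr_deriv ?_
  have hden : 1 + ((2 * a * x + b) / √(-discrim a b c)) ^ 2
      = 4 * a * (a * x ^ 2 + b * x + c) / √(-discrim a b c) ^ 2 := by
    rw [div_pow, hsq, eq_div_iff (pow_ne_zero 2 hs), add_mul, div_mul_cancel₀ _ (pow_ne_zero 2 hs),
      hs2]
    ring
  rw [hden]
  generalize a * x ^ 2 + b * x + c = q at *
  field_simp
  norm_num

lemma integral_inv_quadratic (h : discrim a b c < 0) :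
    ∫ x in u..v, (a * x ^ 2 + b * x + c)⁻¹
      = 2 / √(-discrim a b c) * (arctan ((2 * a * v + b) / √(-discrim a b c))
        - arctan ((2 * a * u + b) / √(-discrim a b c))) := by
  have hint : IntervalIntegrable (fun x ↦ (a * x ^ 2 + b * x + c)⁻¹) MeasureTheory.volume u v := by
    simpa only [zpow_neg_one] using
      intervalIntegrable_quadratic_zpow (-1) fun x _ ↦ quadratic_ne_zero_of_discrim_neg h x
  rw [integral_eq_sub_of_hasDerivAt (fun x _ ↦ hasDerivAt_arctan_quadratic h x) hint, mul_sub]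

end Quadratic

lemma one_sub_add_sq_pos (x : ℝ) : 0 < 1 - x + x ^ 2 := by
  linarith [sq_nonneg (x - 1 / 2)]

lemma norm_sub_sq_le_one_div_four {x : ℝ} (hx : x ∈ Set.uIoc (0 : ℝ) 1) :
    ‖x - x ^ 2‖ ≤ 1 / 4 := by
  rw [Set.uIoc_of_le zero_le_one] at hx
  rw [Real.norm_of_nonneg (by nlinarith [hx.1, hx.2])]
  linarith [sq_nonneg (x - 1 / 2)]

lemma integral_one_sub_add_sq_zpow_neg_one :
    ∫ x in (0 : ℝ)..1, (1 - x + x ^ 2) ^ (-1 : ℤ) = 2 * √3 * π / 9 := by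
  have hdiscrim : discrim (1 : ℝ) (-1) 1 = -3 := by norm_num [discrim]
  have h := integral_inv_quadratic (a := 1) (b := -1) (c := 1) (u := 0) (v := 1)
    (by rw [hdiscrim]; norm_num)
  calc ∫ x in (0 : ℝ)..1, (1 - x + x ^ 2) ^ (-1 : ℤ)
      = ∫ x in (0 : ℝ)..1, (1 * x ^ 2 + -1 * x + 1)⁻¹ := by
        simp only [zpow_neg_one]
        ring_nf
    _ = 2 / √3 * (arctan (√3)⁻¹ - arctan (-(√3)⁻¹)) := by
        rw [h, hdiscrim]
        norm_num [neg_div]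
    _ = 2 * √3 * π / 9 := by
        rw [arctan_neg, arctan_inv_sqrt_three]
        field_simp
        rw [Real.sq_sqrt (by norm_num)]
        ring

lemma integral_one_sub_add_sq_zpow_sub_one (n : ℤ) :
    3 * (n : ℝ) * ∫ x in (0 : ℝ)..1, (1 - x + x ^ 2) ^ (n - 1)
      = (4 * n + 2) * (∫ x in (0 : ℝ)..1, (1 - x + x ^ 2) ^ n) - 2 := by
  have hdiscrim : discrim (1 : ℝ) (-1) 1 = -3 := by norm_num [discrim]
  have hq (x : ℝ) : 1 * x ^ 2 + -1 * x + 1 = 1 - x + x ^ 2 := by ring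
  have h := integral_quadratic_zpow_sub_one (a := 1) (b := -1) (c := 1) (u := 0) (v := 1) n
    fun x _ ↦ by rw [hq]; exact (one_sub_add_sq_pos x).ne'
  have h0 : (1 - 0 + 0 ^ 2 : ℝ) ^ n = 1 := by norm_num
  have h1 : (1 - 1 + 1 ^ 2 : ℝ) ^ n = 1 := by norm_num
  simp only [hq, hdiscrim, h0, h1] at h
  linear_combination -h

lemma integral_one_sub_add_sq_zpow_neg_two :
    ∫ x in (0 : ℝ)..1, (1 - x + x ^ 2) ^ (-2 : ℤ) = 2 / 3 + 4 * √3 * π / 27 := by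
  have h := integral_one_sub_add_sq_zpow_sub_one (-1)
  rw [integral_one_sub_add_sq_zpow_neg_one, show (-1 - 1 : ℤ) = -2 from rfl] at h
  push_cast at h
  linear_combination -h / 3

lemma integral_one_sub_add_sq_zpow_neg_three :
    ∫ x in (0 : ℝ)..1, (1 - x + x ^ 2) ^ (-3 : ℤ) = 1 + 4 * √3 * π / 27 := by
  have h := integral_one_sub_add_sq_zpow_sub_one (-2)
  rw [integral_one_sub_add_sq_zpow_neg_two, show (-2 - 1 : ℤ) = -3 from rfl] at h
  push_cast at h
  linear_combination -h / 6

lemma intervalIntegrable_one_sub_add_sq_zpow (n : ℤ) (u v : ℝ) :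
    IntervalIntegrable (fun x : ℝ ↦ (1 - x + x ^ 2) ^ n) MeasureTheory.volume u v := by
  refine (Continuous.zpow₀ ?_ n fun x ↦ .inl (one_sub_add_sq_pos x).ne').intervalIntegrable u v
  fun_prop

lemma integral_sub_sq_mul_one_add_div :
    ∫ x in (0 : ℝ)..1, (x - x ^ 2) * (1 + (x - x ^ 2)) / (1 - (x - x ^ 2)) ^ 3
      = 2 * √3 * π / 27 := by
  have hexpand (x : ℝ) : (x - x ^ 2) * (1 + (x - x ^ 2)) / (1 - (x - x ^ 2)) ^ 3
      = 2 * (1 - x + x ^ 2) ^ (-3 : ℤ) - 3 * (1 - x + x ^ 2) ^ (-2 : ℤ)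
        + (1 - x + x ^ 2) ^ (-1 : ℤ) := by
    have hq := (one_sub_add_sq_pos x).ne'
    rw [← sub_add]
    field_simp
    ring
  have hint (n : ℤ) := intervalIntegrable_one_sub_add_sq_zpow n 0 1
  simp only [hexpand]
  rw [integral_add (((hint _).const_mul _).sub ((hint _).const_mul _)) (hint _),
    integral_sub ((hint _).const_mul _) ((hint _).const_mul _),
    intervalIntegral.integral_const_mul, intervalIntegral.integral_const_mul,
    integral_one_sub_add_sq_zpow_neg_three, integral_one_sub_add_sq_zpow_neg_two,
    integral_one_sub_add_sq_zpow_neg_one]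
  ring

lemma integral_inv_mul_sub_sq_div :
    ∫ x in (0 : ℝ)..1, (1 - x + x ^ 2)⁻¹ * ((x - x ^ 2) / (1 - (x - x ^ 2)) ^ 2) = 1 / 3 := by
  have hexpand (x : ℝ) : (1 - x + x ^ 2)⁻¹ * ((x - x ^ 2) / (1 - (x - x ^ 2)) ^ 2)
      = (1 - x + x ^ 2) ^ (-3 : ℤ) - (1 - x + x ^ 2) ^ (-2 : ℤ) := by
    have hq := (one_sub_add_sq_pos x).ne'
    rw [← sub_add]
    field_simp
    ring
  have hint (n : ℤ) := intervalIntegrable_one_sub_add_sq_zpow n 0 1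
  simp only [hexpand]
  rw [integral_sub (hint _) (hint _), integral_one_sub_add_sq_zpow_neg_three,
    integral_one_sub_add_sq_zpow_neg_two]
  ring

lemma hasSum_sq_mul_integral_sub_sq_pow :
    HasSum (fun m : ℕ ↦ (m : ℝ) ^ 2 * ∫ x in (0 : ℝ)..1, (x - x ^ 2) ^ m) (2 * √3 * π / 27) := by
  have hsummable : Summable fun m : ℕ ↦ ‖(m : ℝ) ^ 2‖ * (1 / 4) ^ m := by
    simpa using summable_pow_mul_geometric_of_norm_lt_one 2 (r := (1 / 4 : ℝ)) (by norm_num)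
  have hcont : Continuous fun x : ℝ ↦ x - x ^ 2 := by fun_prop
  have hsum := hasSum_mul_integral_mul_pow (μ := MeasureTheory.volume) (g := fun _ ↦ 1) hsummable
    intervalIntegrable_const hcont.aestronglyMeasurable (fun _ ↦ norm_sub_sq_le_one_div_four)
    fun x hx ↦
      hasSum_sq_mul_geometric_of_norm_lt_one
        ((norm_sub_sq_le_one_div_four hx).trans_lt (by norm_num))
  simpa only [one_mul, integral_sub_sq_mul_one_add_div] using hsum

lemma hasSum_coe_mul_integral_sub_sq_pow_div :
    HasSum (fun m : ℕ ↦ (m : ℝ) * ∫ x in (0 : ℝ)..1, (x - x ^ 2) ^ m / (1 - x + x ^ 2))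
      (1 / 3) := by
  have hsummable : Summable fun m : ℕ ↦ ‖(m : ℝ)‖ * (1 / 4) ^ m := by
    simpa using summable_pow_mul_geometric_of_norm_lt_one 1 (r := (1 / 4 : ℝ)) (by norm_num)
  have hint : IntervalIntegrable (fun x : ℝ ↦ (1 - x + x ^ 2)⁻¹) MeasureTheory.volume 0 1 := by
    simpa only [zpow_neg_one] using intervalIntegrable_one_sub_add_sq_zpow (-1) 0 1
  have hcont : Continuous fun x : ℝ ↦ x - x ^ 2 := by fun_prop
  have hsum := hasSum_mul_integral_mul_pow hsummable hint
    hcont.aestronglyMeasurable (fun _ ↦ norm_sub_sq_le_one_div_four) fun x hx ↦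
      hasSum_coe_mul_geometric_of_norm_lt_one
        ((norm_sub_sq_le_one_div_four hx).trans_lt (by norm_num))
  rw [integral_inv_mul_sub_sq_div] at hsum
  simpa only [div_eq_inv_mul] using hsum

lemma intervalIntegrable_sub_sq_pow_div (m : ℕ) (u v : ℝ) :
    IntervalIntegrable (fun x : ℝ ↦ (x - x ^ 2) ^ m / (1 - x + x ^ 2))
      MeasureTheory.volume u v := by
  refine (Continuous.div₀ ?_ ?_ fun x ↦ (one_sub_add_sq_pos x).ne').intervalIntegrable u v <;>
    fun_prop

lemma integral_id_mul_sub_sq_pow_div (m : ℕ) :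
    ∫ x in (0 : ℝ)..1, x * ((x - x ^ 2) ^ m / (1 - x + x ^ 2))
      = 1 / 2 * ∫ x in (0 : ℝ)..1, (x - x ^ 2) ^ m / (1 - x + x ^ 2) := by
  simpa only [smul_eq_mul, zero_add] using
    integral_id_smul_of_symmetric (intervalIntegrable_sub_sq_pow_div m 0 1) fun x _ ↦ by ring_nf

lemma integral_coe_mul_add_id_mul_sub_sq_pow (m : ℕ) :
    ∫ x in (0 : ℝ)..1, ((m : ℝ) * (x - x ^ 2) ^ m + x * (x - x ^ 2) ^ m / (1 - x + x ^ 2))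
      = m * (∫ x in (0 : ℝ)..1, (x - x ^ 2) ^ m)
        + 1 / 2 * ∫ x in (0 : ℝ)..1, (x - x ^ 2) ^ m / (1 - x + x ^ 2) := by
  have hpow : IntervalIntegrable (fun x : ℝ ↦ (m : ℝ) * (x - x ^ 2) ^ m)
      MeasureTheory.volume 0 1 :=
    Continuous.intervalIntegrable (by fun_prop) 0 1
  have hdiv : IntervalIntegrable (fun x : ℝ ↦ x * ((x - x ^ 2) ^ m / (1 - x + x ^ 2)))
      MeasureTheory.volume 0 1 :=
    (intervalIntegrable_sub_sq_pow_div m 0 1).continuousOn_mul continuousOn_id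
  simp only [mul_div_assoc]
  rw [integral_add hpow hdiv, intervalIntegral.integral_const_mul, integral_id_mul_sub_sq_pow_div]

/-- `Σ_{m=0}^∞ m ∫_0^1 (m (x−x²)^m + x (x−x²)^m/(1−x+x²)) dx = (9 + 4√3 π)/54`. -/
theorem stmt15 :
    (∑' m : ℕ, (m : ℝ) * ∫ x in (0 : ℝ)..1,
        ((m : ℝ) * (x - x ^ 2) ^ m + x * (x - x ^ 2) ^ m / (1 - x + x ^ 2)))
      = (9 + 4 * Real.sqrt 3 * π) / 54 := by
  have hsum := hasSum_sq_mul_integral_sub_sq_pow.add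
    (hasSum_coe_mul_integral_sub_sq_pow_div.mul_left (1 / 2))
  calc _ = 2 * √3 * π / 27 + 1 / 2 * (1 / 3) := by
        rw [← hsum.tsum_eq]
        refine tsum_congr fun m ↦ ?_
        rw [integral_coe_mul_add_id_mul_sub_sq_pow]
        ring
    _ = (9 + 4 * Real.sqrt 3 * π) / 54 := by ring
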